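/- Let X be ℝ² equipped with a norm making it a real Banach space. Let v₁, v₂ ∈ S_X satisfy v₁ ≠ ±v₂ and v₁ ≺ v₂, and let w₁, w₂ ∈ S_X be such that vᵢ is isosceles orthogonal to wᵢ and −wᵢ ≺ vᵢ ≺ wᵢ for i ∈ {1, 2}. Then w₁ ≺ w₂. -/

import Mathlib

/-- The orientation relation `≺` on a space identified with `ℝ²` via the linear
equivalence `φ`: `a ≺ b` iff `a₁ b₂ - a₂ b₁ > 0`. -/
def precRel {X : Type*} [NormedAddCommGroup X] [NormedSpace ℝ X]
    (φ : X ≃ₗ[ℝ] ℝ × ℝ) (a b : X) : Prop :=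
  (φ a).1 * (φ b).2 - (φ a).2 * (φ b).1 > 0

/-!
If `x` and `y` are unit vectors with `x ⊥_I y` and `x ≺ y`, then for every unit vector `z`
`z ≺ y ↔ ‖x - z‖ < ‖x + z‖`: as `z` moves along the half circle from `x` through `y` to `-x`,
`‖x - z‖` increases and `‖x + z‖` decreases, and `y` is the only crossing point. The right-hand
side is symmetric in `x` and `z`. Since `w₁ ⊥_I -v₁` and `w₁ ≺ -v₁`, the relation `v₂ ≺ -v₁`
gives `‖w₁ - v₂‖ < ‖w₁ + v₂‖`, and read with `x = v₂`, `y = w₂` this says `w₁ ≺ w₂`.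
-/

-- If `z` lies between `x` and `y`, then `y` lies between `-x` and `z`. Carrying a coefficient on
-- the middle vector keeps this exchange free of division.
theorem smul_eq_neg_smul_add {R M : Type*} [Ring R] [AddCommGroup M] [Module R M] {x y z : M}
    {a b c : R} (h : c • z = a • x + b • y) : b • y = a • -x + c • z := by
  rw [smul_neg, h, neg_add_cancel_left]

section Monotonicity

variable {X : Type*} [SeminormedAddCommGroup X] [NormedSpace ℝ X] {x y z : X} {a b c : ℝ}

theorem coeff_le_add_of_smul_eq (ha : 0 ≤ a) (hb : 0 ≤ b)
    (hx : ‖x‖ = 1) (hy : ‖y‖ = 1) (hz : ‖z‖ = 1) (h : c • z = a • x + b • y) : c ≤ a + b :=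
  calc c ≤ ‖c • z‖ := by rw [norm_smul, hz, mul_one]; exact Real.le_norm_self c
    _ ≤ ‖a • x‖ + ‖b • y‖ := h ▸ norm_add_le _ _
    _ = a + b := by
      rw [norm_smul_of_nonneg ha, norm_smul_of_nonneg hb, hx, hy, mul_one, mul_one]

theorem add_mul_norm_sub_le_of_smul_eq (ha : 0 ≤ a) (hb : 0 ≤ b)
    (hx : ‖x‖ = 1) (hy : ‖y‖ = 1) (hz : ‖z‖ = 1) (h : c • z = a • x + b • y) :
    (a + b) * ‖x - z‖ ≤ b * ‖x - y‖ + (a + b - c) := by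
  have hsum : 0 ≤ a + b - c := sub_nonneg.mpr (coeff_le_add_of_smul_eq ha hb hx hy hz h)
  have hdecomp : (a + b) • (x - z) = b • (x - y) - (a + b - c) • z := by
    linear_combination (norm := module) (-1 : ℝ) • h
  calc (a + b) * ‖x - z‖ = ‖(a + b) • (x - z)‖ := (norm_smul_of_nonneg (add_nonneg ha hb) _).symm
    _ ≤ ‖b • (x - y)‖ + ‖(a + b - c) • z‖ := hdecomp ▸ norm_sub_le _ _
    _ = b * ‖x - y‖ + (a + b - c) := by
      rw [norm_smul_of_nonneg hb, norm_smul_of_nonneg hsum, hz, mul_one]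

theorem add_sub_le_mul_norm_sub_of_smul_eq (ha : 0 ≤ a) (hb : 0 ≤ b) (hc : 0 ≤ c)
    (hy : ‖y‖ = 1) (hz : ‖z‖ = 1) (h : c • z = a • x + b • y) :
    a + b - c ≤ a * ‖x - y‖ := by
  have hdecomp : (a + b) • y = c • z - a • (x - y) := by
    rw [h]
    module
  have htri : ‖(a + b) • y‖ ≤ ‖c • z‖ + ‖a • (x - y)‖ := hdecomp ▸ norm_sub_le _ _
  rw [norm_smul_of_nonneg (add_nonneg ha hb), norm_smul_of_nonneg hc, norm_smul_of_nonneg ha,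
    hy, hz] at htri
  linarith

theorem norm_sub_le_norm_sub_of_smul_eq (ha : 0 ≤ a) (hb : 0 ≤ b) (hab : 0 < a + b) (hc : 0 ≤ c)
    (hx : ‖x‖ = 1) (hy : ‖y‖ = 1) (hz : ‖z‖ = 1) (h : c • z = a • x + b • y) :
    ‖x - z‖ ≤ ‖x - y‖ := by
  refine le_of_mul_le_mul_left ?_ hab
  linarith [add_mul_norm_sub_le_of_smul_eq ha hb hx hy hz h,
    add_sub_le_mul_norm_sub_of_smul_eq ha hb hc hy hz h]

theorem mul_norm_sub_eq_of_norm_sub_eq (ha : 0 ≤ a) (hb : 0 ≤ b) (hc : 0 ≤ c)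
    (hx : ‖x‖ = 1) (hy : ‖y‖ = 1) (hz : ‖z‖ = 1) (h : c • z = a • x + b • y)
    (heq : ‖x - z‖ = ‖x - y‖) : a * ‖x - y‖ = a + b - c := by
  have hle := add_mul_norm_sub_le_of_smul_eq ha hb hx hy hz h
  rw [heq] at hle
  linarith [add_sub_le_mul_norm_sub_of_smul_eq ha hb hc hy hz h]

theorem norm_add_le_norm_add_of_smul_eq (ha : 0 ≤ a) (hb : 0 ≤ b) (hc : 0 ≤ c) (hac : 0 < a + c)
    (hx : ‖x‖ = 1) (hy : ‖y‖ = 1) (hz : ‖z‖ = 1) (h : c • z = a • x + b • y) :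
    ‖x + y‖ ≤ ‖x + z‖ := by
  simpa only [← neg_add', norm_neg] using norm_sub_le_norm_sub_of_smul_eq ha hc hac hb
    ((norm_neg x).trans hx) hz hy (smul_eq_neg_smul_add h)

theorem mul_norm_add_eq_of_norm_add_eq (ha : 0 ≤ a) (hb : 0 ≤ b) (hc : 0 ≤ c)
    (hx : ‖x‖ = 1) (hy : ‖y‖ = 1) (hz : ‖z‖ = 1) (h : c • z = a • x + b • y)
    (heq : ‖x + y‖ = ‖x + z‖) : a * ‖x + z‖ = a + c - b := by
  simpa only [← neg_add', norm_neg] using mul_norm_sub_eq_of_norm_sub_eq ha hc hb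
    ((norm_neg x).trans hx) hz hy (smul_eq_neg_smul_add h)
    (by simpa only [← neg_add', norm_neg] using heq)

end Monotonicity

/-- Isosceles orthogonality `x ⊥_I y`: the two diagonals of the parallelogram spanned by `x` and
`y` have the same length. -/
def IsoscelesOrthogonal {X : Type*} [SeminormedAddCommGroup X] (x y : X) : Prop :=
  ‖x + y‖ = ‖x - y‖

namespace IsoscelesOrthogonal

section Symmetry

variable {X : Type*} [SeminormedAddCommGroup X] {x y : X}

protected theorem symm (h : IsoscelesOrthogonal x y) : IsoscelesOrthogonal y x := by
  rwa [IsoscelesOrthogonal, add_comm, norm_sub_rev]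

theorem neg_right (h : IsoscelesOrthogonal x y) : IsoscelesOrthogonal x (-y) := by
  rw [IsoscelesOrthogonal, sub_neg_eq_add, ← sub_eq_add_neg]
  exact Eq.symm h

end Symmetry

variable {X : Type*} [SeminormedAddCommGroup X] [NormedSpace ℝ X] {x y z : X} {a b c : ℝ}

theorem norm_sub_le_norm_add (hxy : IsoscelesOrthogonal x y)
    (hx : ‖x‖ = 1) (hy : ‖y‖ = 1) (hz : ‖z‖ = 1) (ha : 0 ≤ a) (hc : 0 < c)
    (h : c • z = a • x + b • y) : ‖x - z‖ ≤ ‖x + z‖ := by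
  wlog hb : 0 ≤ b generalizing y b
  · exact this hxy.neg_right ((norm_neg y).trans hy) (h.trans (by rw [neg_smul_neg])) (by linarith)
  have hab : 0 < a + b := hc.trans_le (coeff_le_add_of_smul_eq ha hb hx hy hz h)
  calc ‖x - z‖ ≤ ‖x - y‖ := norm_sub_le_norm_sub_of_smul_eq ha hb hab hc.le hx hy hz h
    _ = ‖x + y‖ := Eq.symm hxy
    _ ≤ ‖x + z‖ := norm_add_le_norm_add_of_smul_eq ha hb hc.le (by positivity) hx hy hz h

theorem norm_sub_lt_norm_add (hxy : IsoscelesOrthogonal x y)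
    (hx : ‖x‖ = 1) (hy : ‖y‖ = 1) (hz : ‖z‖ = 1) (ha : 0 < a) (hc : 0 ≤ c)
    (h : c • z = a • x + b • y) : ‖x - z‖ < ‖x + z‖ := by
  wlog hb : 0 ≤ b generalizing y b
  · exact this hxy.neg_right ((norm_neg y).trans hy) (h.trans (by rw [neg_smul_neg])) (by linarith)
  have hsub : ‖x - z‖ ≤ ‖x - y‖ :=
    norm_sub_le_norm_sub_of_smul_eq ha.le hb (by positivity) hc hx hy hz h
  have hadd : ‖x + y‖ ≤ ‖x + z‖ :=
    norm_add_le_norm_add_of_smul_eq ha.le hb hc (by positivity) hx hy hz h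
  have hdiag : ‖x + y‖ = ‖x - y‖ := hxy
  by_contra! hle
  -- All of `‖x ± y‖` and `‖x ± z‖` then equal `1`, and `b = c`, so the segment from `y - x` to
  -- `z + x` has direction `x` and length greater than `2`, yet its endpoints are unit vectors.
  have hsub_eq : ‖x - z‖ = ‖x - y‖ := by linarith
  have hadd_eq : ‖x + z‖ = ‖x - y‖ := by linarith
  have hmul_sub : a * ‖x - y‖ = a + b - c :=
    mul_norm_sub_eq_of_norm_sub_eq ha.le hb hc hx hy hz h hsub_eq
  have hmul_add : a * ‖x - y‖ = a + c - b := hadd_eq ▸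
    mul_norm_add_eq_of_norm_add_eq ha.le hb hc hx hy hz h (hdiag.trans hadd_eq.symm)
  obtain rfl : b = c := by linarith
  have hone : ‖x - y‖ = 1 := mul_left_cancel₀ ha.ne' (by linarith)
  have hdecomp : (a + 2 * b) • x = b • (x + z) + b • (x - y) := by
    linear_combination (norm := module) (-1 : ℝ) • h
  have htri : ‖(a + 2 * b) • x‖ ≤ ‖b • (x + z)‖ + ‖b • (x - y)‖ := hdecomp ▸ norm_add_le _ _
  rw [norm_smul_of_nonneg (by positivity), norm_smul_of_nonneg hb, norm_smul_of_nonneg hb,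
    hx, hadd_eq, hone] at htri
  linarith

theorem coeff_pos_iff_norm_sub_lt_norm_add (hxy : IsoscelesOrthogonal x y)
    (hx : ‖x‖ = 1) (hy : ‖y‖ = 1) (hz : ‖z‖ = 1) (hc : 0 < c)
    (h : c • z = a • x + b • y) : 0 < a ↔ ‖x - z‖ < ‖x + z‖ := by
  refine ⟨fun ha => hxy.norm_sub_lt_norm_add hx hy hz ha hc.le h, fun hlt => ?_⟩
  by_contra! ha
  have hneg : c • -z = (-a) • x + (-b) • y := by
    rw [smul_neg, h]
    module
  have hle : ‖x - -z‖ ≤ ‖x + -z‖ :=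
    hxy.norm_sub_le_norm_add hx hy ((norm_neg z).trans hz) (neg_nonneg.mpr ha) hc hneg
  rw [sub_neg_eq_add, ← sub_eq_add_neg] at hle
  exact hle.not_gt hlt

end IsoscelesOrthogonal

/-- The determinant of `x` and `y` in the coordinates `φ`; `x ≺ y` says that it is positive. -/
def planeDet {X : Type*} [AddCommGroup X] [Module ℝ X] (φ : X ≃ₗ[ℝ] ℝ × ℝ) (x y : X) : ℝ :=
  (φ x).1 * (φ y).2 - (φ x).2 * (φ y).1

theorem planeDet_smul_eq {X : Type*} [AddCommGroup X] [Module ℝ X] (φ : X ≃ₗ[ℝ] ℝ × ℝ)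
    (x y z : X) : planeDet φ x y • z = planeDet φ z y • x + planeDet φ x z • y := by
  apply φ.injective
  ext <;> simp only [planeDet, map_add, map_smul, Prod.fst_add, Prod.snd_add, Prod.smul_fst,
    Prod.smul_snd, smul_eq_mul] <;> ring

section Orientation

variable {X : Type*} [NormedAddCommGroup X] [NormedSpace ℝ X] {φ : X ≃ₗ[ℝ] ℝ × ℝ} {x y z : X}

theorem precRel.neg_right (h : precRel φ x y) : precRel φ y (-x) := by
  simp only [precRel, map_neg, Prod.fst_neg, Prod.snd_neg] at h ⊢
  linarith

theorem precRel_iff_norm_sub_lt_norm_add (hxy : precRel φ x y) (hI : IsoscelesOrthogonal x y)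
    (hx : ‖x‖ = 1) (hy : ‖y‖ = 1) (hz : ‖z‖ = 1) :
    precRel φ z y ↔ ‖x - z‖ < ‖x + z‖ :=
  hI.coeff_pos_iff_norm_sub_lt_norm_add hx hy hz hxy (planeDet_smul_eq φ x y z)

end Orientation

/-- Let `X` be `ℝ²` equipped with a norm making it a real Banach space (here: a real
Banach space linearly identified with `ℝ²` via `φ`). If `v₁, v₂` are unit vectors with
`v₁ ≠ ±v₂` and `v₁ ≺ v₂`, and `w₁, w₂` are unit vectors with `vᵢ ⊥_I wᵢ` and
`-wᵢ ≺ vᵢ ≺ wᵢ` for `i = 1, 2`, then `w₁ ≺ w₂`. -/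
theorem stmt8 {X : Type*} [NormedAddCommGroup X] [NormedSpace ℝ X] [CompleteSpace X]
    (φ : X ≃ₗ[ℝ] ℝ × ℝ)
    (v₁ v₂ w₁ w₂ : X)
    (hv₁ : ‖v₁‖ = 1) (hv₂ : ‖v₂‖ = 1) (hw₁ : ‖w₁‖ = 1) (hw₂ : ‖w₂‖ = 1)
    (hne : v₁ ≠ v₂) (hne' : v₁ ≠ -v₂)
    (hvv : precRel φ v₁ v₂)
    (hI₁ : ‖v₁ + w₁‖ = ‖v₁ - w₁‖) (hI₂ : ‖v₂ + w₂‖ = ‖v₂ - w₂‖)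
    (h₁ : precRel φ (-w₁) v₁) (h₁' : precRel φ v₁ w₁)
    (h₂ : precRel φ (-w₂) v₂) (h₂' : precRel φ v₂ w₂) :
    precRel φ w₁ w₂ := by
  have hI₁' : IsoscelesOrthogonal w₁ (-v₁) := (IsoscelesOrthogonal.symm hI₁).neg_right
  have hcloser : ‖w₁ - v₂‖ < ‖w₁ + v₂‖ :=
    (precRel_iff_norm_sub_lt_norm_add h₁'.neg_right hI₁' hw₁ ((norm_neg v₁).trans hv₁) hv₂).mp
      hvv.neg_right
  rw [norm_sub_rev, add_comm] at hcloser
  exact (precRel_iff_norm_sub_lt_norm_add h₂' hI₂ hv₂ hw₂ hw₁).mpr hcloser
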